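/- Let ε > 0 and let Q be a privacy protocol satisfying ε-LDP, all of whose entries are positive and whose rank is a, and let μ be a Borel probability measure on the simplex 𝒫 having a continuous density, with p ↦ log det D_p μ-integrable. Then γ_μ(Q) ≥ (a−1) · log( √(2πe) / (e^ε − 1) ). -/

import Mathlib

/-!
The bound holds pointwise: `det D_p ≤ (e^ε - 1)^(2(a-1))` for every `p` in the simplex
(`det_Dmat_le`), and `μ` is concentrated on the simplex (`ae_mem_simplex`), so integrating the
logarithm gives the claim. Full rank of `Q` makes `D_p` positive definite, so that the logarithm
is monotone there.

For the pointwise bound put `s = e^ε - 1`. The matrix `D_p` is the Gram matrix of the columns of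
`Q` for the inner product with weights `1 / (Qp)_y`. Because `∑ x, p x = 1`, the change of basis
from the columns `Q_0, …, Q_{a-1}` to `s Qp, Q_1 - Q_0, …, Q_{a-1} - Q_0` has determinant `s`
(`det_diffMat`, `det_mixMat`, `mul_diffMat_mul_mixMat`), so the new Gram matrix has determinant
`s² det D_p`. Since `(Qp)_y` is at least the smallest entry of row `y`, privacy gives
`|Q_{y|x} - Q_{y|0}| ≤ s (Qp)_y` (`abs_sub_le_of_LDP`). Hence every new vector has squared norm at
most `∑ y, s² (Qp)_y = s²`, the trace is at most `a s²`, and the arithmetic-geometric mean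
inequality for the eigenvalues (`det_le_pow_of_trace_le`) yields `s² det D_p ≤ s^(2a)`.
-/

open MeasureTheory Matrix Finset Filter Real

noncomputable section

/-- The probability simplex in `ℝ^a`. -/
def simplex (a : ℕ) : Set (Fin a → ℝ) :=
  {p | (∀ x, 0 ≤ p x) ∧ ∑ x, p x = 1}

/-- Likelihood `L_y(p) = ∏ i, (Qp)_{y i}`. -/
def lik {a b n : ℕ} (Q : Matrix (Fin b) (Fin a) ℝ) (y : Fin n → Fin b)
    (p : Fin a → ℝ) : ℝ :=
  ∏ i, Q.mulVec p (y i)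

/-- Mean squared error for distribution estimation. -/
def MSEdistr {a b n : ℕ} (Q : Matrix (Fin b) (Fin a) ℝ) (μ : Measure (Fin a → ℝ))
    (Est : (Fin n → Fin b) → (Fin a → ℝ)) : ℝ :=
  ∑ y : (Fin n → Fin b), ∫ p, (∑ x, (p x - Est y x) ^ 2) * lik Q y p ∂μ

/-- The posterior-mean estimator for distribution estimation. -/
def PiOpt {a b n : ℕ} (Q : Matrix (Fin b) (Fin a) ℝ) (μ : Measure (Fin a → ℝ))
    (y : Fin n → Fin b) : Fin a → ℝ :=
  fun x => (∫ p, p x * lik Q y p ∂μ) / (∫ p, lik Q y p ∂μ)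

/-- Empirical frequency vector of a data vector. -/
def freqVec {a n : ℕ} (xv : Fin n → Fin a) : Fin a → ℝ :=
  fun α => ((Finset.univ.filter fun i => xv i = α).card : ℝ) / n

/-- Joint weight `w(x⃗,y⃗) = ∫ ∏ i, p_{x_i} Q_{y_i|x_i} dμ(p)`. -/
def wgt {a b n : ℕ} (Q : Matrix (Fin b) (Fin a) ℝ) (μ : Measure (Fin a → ℝ))
    (xv : Fin n → Fin a) (y : Fin n → Fin b) : ℝ :=
  ∫ p, (∏ i, p (xv i) * Q (y i) (xv i)) ∂μ

/-- Mean squared error for frequency estimation. -/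
def MSEfreq {a b n : ℕ} (Q : Matrix (Fin b) (Fin a) ℝ) (μ : Measure (Fin a → ℝ))
    (Est : (Fin n → Fin b) → (Fin a → ℝ)) : ℝ :=
  ∑ xv : (Fin n → Fin a), ∑ y : (Fin n → Fin b),
    wgt Q μ xv y * ∑ α, (freqVec xv α - Est y α) ^ 2

/-- The posterior-mean estimator for frequency estimation. -/
def PhiOpt {a b n : ℕ} (Q : Matrix (Fin b) (Fin a) ℝ) (μ : Measure (Fin a → ℝ))
    (y : Fin n → Fin b) : Fin a → ℝ :=
  fun α => (∑ xv : (Fin n → Fin a), wgt Q μ xv y * freqVec xv α) /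
    (∑ xv : (Fin n → Fin a), wgt Q μ xv y)

/-- `P(φ, y⃗) = ∑_{x⃗ : F(x⃗) = φ} w(x⃗, y⃗)`. -/
def Pphi {a b n : ℕ} (Q : Matrix (Fin b) (Fin a) ℝ) (μ : Measure (Fin a → ℝ))
    (φ : Fin a → ℝ) (y : Fin n → Fin b) : ℝ := by
  classical
  exact ∑ xv ∈ Finset.univ.filter (fun xv : Fin n → Fin a => freqVec xv = φ), wgt Q μ xv y

/-- Conditional Shannon entropy `H_n(F | Y⃗)` (terms with zero probability vanish since
`Real.log 0 = 0`). -/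
def HFcond {a b : ℕ} (Q : Matrix (Fin b) (Fin a) ℝ) (μ : Measure (Fin a → ℝ))
    (n : ℕ) : ℝ := by
  classical
  exact -(∑ y : (Fin n → Fin b), ∑ φ ∈ Finset.image (freqVec (a := a) (n := n)) Finset.univ,
      Pphi Q μ φ y * Real.log (Pphi Q μ φ y /
        ∑ φ' ∈ Finset.image (freqVec (a := a) (n := n)) Finset.univ, Pphi Q μ φ' y))

/-- The set `Δ = {q ∈ ℝ^m : q ≥ 0, ∑ q ≤ 1}`. -/
def stdCorner (m : ℕ) : Set (Fin m → ℝ) :=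
  {q | (∀ i, 0 ≤ q i) ∧ ∑ i, q i ≤ 1}

/-- The identification `Δ ⊂ ℝ^{a-1} → 𝒫 ⊂ ℝ^a`,
`q ↦ (q_1, …, q_{a-1}, 1 - ∑ q_i)`. -/
def emb (a : ℕ) (q : Fin (a - 1) → ℝ) : Fin a → ℝ :=
  fun x => if h : (x : ℕ) < a - 1 then q ⟨x.1, h⟩ else 1 - ∑ i, q i

/-- `μ` has density `f` (w.r.t. Lebesgue measure on `Δ`). -/
def IsDensity {a : ℕ} (μ : Measure (Fin a → ℝ)) (f : (Fin (a - 1) → ℝ) → ℝ) : Prop :=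
  Measurable f ∧ (∀ q, 0 ≤ f q) ∧ (∫ q in stdCorner (a - 1), f q) = 1 ∧
  ∀ g : (Fin a → ℝ) → ℝ, Measurable g → (∃ C, ∀ p, |g p| ≤ C) →
    (∫ p, g p ∂μ) = ∫ q in stdCorner (a - 1), g (emb a q) * f q

/-- `μ` has continuous density `f`. -/
def IsContDensity {a : ℕ} (μ : Measure (Fin a → ℝ)) (f : (Fin (a - 1) → ℝ) → ℝ) : Prop :=
  ContinuousOn f (stdCorner (a - 1)) ∧ (∀ q, 0 ≤ f q) ∧
  (∫ q in stdCorner (a - 1), f q) = 1 ∧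
  ∀ g : (Fin a → ℝ) → ℝ, Measurable g → (∃ C, ∀ p, |g p| ≤ C) →
    (∫ p, g p ∂μ) = ∫ q in stdCorner (a - 1), g (emb a q) * f q

/-- Normalisation constant `C_{y⃗} = ∫_Δ f(q) L_{y⃗}(p(q)) dλ(q)`. -/
def Cw {a b n : ℕ} (Q : Matrix (Fin b) (Fin a) ℝ) (f : (Fin (a - 1) → ℝ) → ℝ)
    (y : Fin n → Fin b) : ℝ :=
  ∫ q in stdCorner (a - 1), f q * lik Q y (emb a q)

/-- Posterior density `g_{y⃗}(q) = f(q) L_{y⃗}(p(q)) / C_{y⃗}`. -/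
def gpost {a b n : ℕ} (Q : Matrix (Fin b) (Fin a) ℝ) (f : (Fin (a - 1) → ℝ) → ℝ)
    (y : Fin n → Fin b) (q : Fin (a - 1) → ℝ) : ℝ :=
  f q * lik Q y (emb a q) / Cw Q f y

/-- Conditional differential entropy `h_n(P | Y⃗)`. -/
def hCond {a b : ℕ} (Q : Matrix (Fin b) (Fin a) ℝ) (f : (Fin (a - 1) → ℝ) → ℝ)
    (n : ℕ) : ℝ :=
  ∑ y : (Fin n → Fin b),
    Cw Q f y * (-(∫ q in stdCorner (a - 1), gpost Q f y q * Real.log (gpost Q f y q)))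

/-- The matrix `D_p = Qᵀ · diag(Qp)⁻¹ · Q`. -/
def Dmat {a b : ℕ} (Q : Matrix (Fin b) (Fin a) ℝ) (p : Fin a → ℝ) :
    Matrix (Fin a) (Fin a) ℝ :=
  Qᵀ * Matrix.diagonal (fun y => (Q.mulVec p y)⁻¹) * Q

/-- The constant `γ_μ(Q)`. -/
def gammaMu {a b : ℕ} (Q : Matrix (Fin b) (Fin a) ℝ) (μ : Measure (Fin a → ℝ)) : ℝ :=
  (((a : ℝ) - 1) / 2) * Real.log (2 * π * Real.exp 1) -
    (1 / 2) * ∫ p, Real.log (Dmat Q p).det ∂μ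

/-- The truncated column `w_x = (Q_{1|x}, …, Q_{b-1|x})`. -/
def wcol {a b : ℕ} (Q : Matrix (Fin b) (Fin a) ℝ) (x : Fin a) : Fin (b - 1) → ℝ :=
  fun y => Q ⟨y.1, lt_of_lt_of_le y.2 (Nat.sub_le b 1)⟩ x

/-- The matrix `E_x = diag(w_x) - w_x w_xᵀ`. -/
def Emat {a b : ℕ} (Q : Matrix (Fin b) (Fin a) ℝ) (x : Fin a) :
    Matrix (Fin (b - 1)) (Fin (b - 1)) ℝ :=
  Matrix.diagonal (wcol Q x) - Matrix.vecMulVec (wcol Q x) (wcol Q x)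

/-- The matrix `G_p = ∑ x, p_x E_x`. -/
def Gmat {a b : ℕ} (Q : Matrix (Fin b) (Fin a) ℝ) (p : Fin a → ℝ) :
    Matrix (Fin (b - 1)) (Fin (b - 1)) ℝ :=
  ∑ x, p x • Emat Q x

/-- The constant `δ_μ(Q)`. -/
def deltaMu {a b : ℕ} (Q : Matrix (Fin b) (Fin a) ℝ) (μ : Measure (Fin a → ℝ)) : ℝ :=
  gammaMu Q μ +
    (1 / 2) * ∫ p, (Real.log (Gmat Q p).det - ∑ y, Real.log (Q.mulVec p y)) ∂μ

/-- `Q` satisfies `ε`-local differential privacy. -/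
def SatisfiesLDP {a b : ℕ} (Q : Matrix (Fin b) (Fin a) ℝ) (ε : ℝ) : Prop :=
  ∀ x x' : Fin a, ∀ y : Fin b, Q y x' ≤ Real.exp ε * Q y x

/-- A positive semidefinite matrix with trace at most `n c` has determinant at most `c ^ n`:
the arithmetic-geometric mean inequality for the eigenvalues. -/
lemma det_le_pow_of_trace_le {n : ℕ} (hn : 0 < n) {A : Matrix (Fin n) (Fin n) ℝ}
    (hA : A.PosSemidef) {c : ℝ} (htr : A.trace ≤ n * c) : A.det ≤ c ^ n := by
  have hn' : (0 : ℝ) < n := by exact_mod_cast hn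
  have hdet : A.det = ∏ i, hA.isHermitian.eigenvalues i := by
    simpa using hA.isHermitian.det_eq_prod_eigenvalues
  have htrace : A.trace = ∑ i, hA.isHermitian.eigenvalues i := by
    simpa using hA.isHermitian.trace_eq_sum_eigenvalues
  have h0 : ∀ i, 0 ≤ hA.isHermitian.eigenvalues i := hA.eigenvalues_nonneg
  have key := Real.geom_mean_le_arith_mean Finset.univ (fun _ : Fin n => (1 : ℝ))
    hA.isHermitian.eigenvalues (by simp) (by simpa using hn) (fun i _ => h0 i)
  simp only [Real.rpow_one, one_mul, Finset.sum_const, Finset.card_univ, Fintype.card_fin,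
    nsmul_eq_mul, mul_one, ← hdet, ← htrace] at key
  have hle : A.det ^ ((n : ℝ)⁻¹) ≤ c := key.trans ((div_le_iff₀' hn').2 htr)
  have hdet0 : 0 ≤ A.det := hdet ▸ Finset.prod_nonneg fun i _ => h0 i
  calc A.det = (A.det ^ ((n : ℝ)⁻¹)) ^ n := (Real.rpow_inv_natCast_pow hdet0 hn.ne').symm
    _ ≤ c ^ n := pow_le_pow_left₀ (Real.rpow_nonneg hdet0 _) hle n

/-- `(Qp)_y` dominates the smallest entry of row `y`, so the differences within row `y` are at
most `(e^ε - 1) (Qp)_y`. -/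
lemma abs_sub_le_of_LDP {a b : ℕ} {Q : Matrix (Fin b) (Fin a) ℝ} {ε : ℝ}
    (hLDP : SatisfiesLDP Q ε) (hε : 0 < ε) {p : Fin a → ℝ}
    (hp : p ∈ simplex a) (y : Fin b) (x x' : Fin a) :
    |Q y x - Q y x'| ≤ (Real.exp ε - 1) * Q.mulVec p y := by
  have : Nonempty (Fin a) := ⟨x⟩
  obtain ⟨z, hz⟩ := Finite.exists_min (Q y)
  have hmin : Q y z ≤ Q.mulVec p y := by
    calc Q y z = ∑ i, Q y z * p i := by rw [← Finset.mul_sum, hp.2, mul_one]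
      _ ≤ ∑ i, Q y i * p i :=
        Finset.sum_le_sum fun i _ => mul_le_mul_of_nonneg_right (hz i) (hp.1 i)
      _ = Q.mulVec p y := rfl
  have hs : 0 ≤ Real.exp ε - 1 := by linarith [Real.add_one_le_exp ε]
  have h1 := mul_le_mul_of_nonneg_left hmin hs
  have h2 := hLDP z x y
  have h3 := hLDP z x' y
  rw [abs_le]
  constructor <;> linarith [hz x, hz x']

lemma mulVec_pos {a b : ℕ} {Q : Matrix (Fin b) (Fin a) ℝ} (hQpos : ∀ y x, 0 < Q y x)
    {p : Fin a → ℝ} (hp : p ∈ simplex a) (y : Fin b) : 0 < Q.mulVec p y := by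
  have hne : ∃ x, 0 < p x := by
    by_contra! h
    have := Finset.sum_nonpos fun x (_ : x ∈ Finset.univ) => h x
    linarith [hp.2]
  obtain ⟨x, hx⟩ := hne
  exact Finset.sum_pos' (fun i _ => mul_nonneg (hQpos y i).le (hp.1 i))
    ⟨x, Finset.mem_univ _, mul_pos (hQpos y x) hx⟩

/-- Unipotent change of basis replacing the columns `Q_x`, `x ≠ 0`, by `Q_x - Q_0`. -/
def diffMat (m : ℕ) : Matrix (Fin (m + 1)) (Fin (m + 1)) ℝ :=
  fun i j => if i = j then 1 else if i = 0 then -1 else 0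

/-- Change of basis replacing column `0` by `s` times the combination of the columns with
coefficients `1, p_1, …, p_m`. -/
def mixMat {m : ℕ} (s : ℝ) (p : Fin (m + 1) → ℝ) : Matrix (Fin (m + 1)) (Fin (m + 1)) ℝ :=
  fun i j => if j = 0 then (if i = 0 then s else s * p i) else if i = j then 1 else 0

lemma det_diffMat (m : ℕ) : (diffMat m).det = 1 := by
  rw [Matrix.det_of_isUpperTriangular]
  · simp [diffMat]
  · intro i j hij
    have hij : j < i := hij
    have : i ≠ 0 := (Fin.pos_of_ne_zero (fun h => by simp [h] at hij)).ne'
    simp [diffMat, hij.ne', this]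

lemma det_mixMat {m : ℕ} (s : ℝ) (p : Fin (m + 1) → ℝ) : (mixMat s p).det = s := by
  rw [Matrix.det_of_isLowerTriangular]
  · rw [Fin.prod_univ_succ]
    simp [mixMat, Fin.succ_ne_zero]
  · intro i j hij
    have hij : i < j := hij
    have : j ≠ 0 := fun h => by simp [h] at hij
    simp [mixMat, hij.ne, this]

lemma mul_diffMat {m b : ℕ} (Q : Matrix (Fin b) (Fin (m + 1)) ℝ) (y : Fin b)
    (x : Fin (m + 1)) :
    (Q * diffMat m) y x = if x = 0 then Q y 0 else Q y x - Q y 0 := by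
  rw [Matrix.mul_apply, Fin.sum_univ_succ]
  refine Fin.cases ?_ (fun j => ?_) x
  · simp [diffMat, Fin.succ_ne_zero]
  · simp [diffMat, Fin.succ_ne_zero, (Fin.succ_ne_zero _).symm]
    ring

/-- In the new basis, column `0` is `s Qp` and the others are the differences `Q_x - Q_0`. -/
lemma mul_diffMat_mul_mixMat {m b : ℕ} (Q : Matrix (Fin b) (Fin (m + 1)) ℝ) (s : ℝ)
    {p : Fin (m + 1) → ℝ} (hp : ∑ x, p x = 1) (y : Fin b) (x : Fin (m + 1)) :
    (Q * (diffMat m * mixMat s p)) y x =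
      if x = 0 then s * Q.mulVec p y else Q y x - Q y 0 := by
  rw [← Matrix.mul_assoc, Matrix.mul_apply, Fin.sum_univ_succ]
  simp only [mul_diffMat]
  refine Fin.cases ?_ (fun j => ?_) x
  · rw [Fin.sum_univ_succ] at hp
    have h0 : p 0 = 1 - ∑ i : Fin m, p i.succ := by linarith
    simp only [mixMat, Fin.succ_ne_zero, if_true, if_false, Matrix.mulVec, dotProduct]
    rw [Fin.sum_univ_succ, h0]
    have : ∑ i : Fin m, (Q y i.succ - Q y 0) * (s * p i.succ)
        = s * ∑ i : Fin m, Q y i.succ * p i.succ - s * Q y 0 * ∑ i : Fin m, p i.succ := by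
      rw [Finset.mul_sum, Finset.mul_sum, ← Finset.sum_sub_distrib]
      exact Finset.sum_congr rfl fun i _ => by ring
    rw [this]
    ring
  · simp [mixMat, Fin.succ_ne_zero, (Fin.succ_ne_zero _).symm]

lemma sum_mulVec_eq_one {a b : ℕ} {Q : Matrix (Fin b) (Fin a) ℝ}
    (hQcol : ∀ x, ∑ y, Q y x = 1) {p : Fin a → ℝ} (hp : p ∈ simplex a) :
    ∑ y, Q.mulVec p y = 1 := by
  simp only [Matrix.mulVec, dotProduct]
  rw [Finset.sum_comm]
  simp [← Finset.sum_mul, hQcol, hp.2]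

lemma Dmat_posDef {a b : ℕ} {Q : Matrix (Fin b) (Fin a) ℝ} (hQpos : ∀ y x, 0 < Q y x)
    (hrank : Q.rank = a) {p : Fin a → ℝ} (hp : p ∈ simplex a) : (Dmat Q p).PosDef := by
  have hinj : Function.Injective Q.mulVec := by
    rw [Matrix.mulVec_injective_iff, linearIndependent_iff_card_eq_finrank_span,
      Set.finrank, ← Matrix.rank_eq_finrank_span_cols, hrank, Fintype.card_fin]
  have hW : (Matrix.diagonal (fun y => (Q.mulVec p y)⁻¹)).PosDef :=
    Matrix.PosDef.diagonal fun y => inv_pos.2 (mulVec_pos hQpos hp y)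
  simpa [Dmat, Matrix.conjTranspose_eq_transpose_of_trivial] using
    hW.conjTranspose_mul_mul_same hinj

/-- The pointwise bound `det D_p ≤ (e^ε - 1)^{2(a-1)}` on the simplex, with `a = m + 1`. -/
lemma det_Dmat_le {m b : ℕ} {Q : Matrix (Fin b) (Fin (m + 1)) ℝ} {ε : ℝ}
    (hLDP : SatisfiesLDP Q ε) (hQpos : ∀ y x, 0 < Q y x) (hQcol : ∀ x, ∑ y, Q y x = 1)
    (hε : 0 < ε) {p : Fin (m + 1) → ℝ} (hp : p ∈ simplex (m + 1)) :
    (Dmat Q p).det ≤ ((Real.exp ε - 1) ^ 2) ^ m := by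
  set s := Real.exp ε - 1 with hs
  have hs0 : 0 < s := by linarith [Real.add_one_le_exp ε]
  set T := diffMat m * mixMat s p with hT
  have hTdet : T.det = s := by rw [hT, Matrix.det_mul, det_diffMat, det_mixMat, one_mul]
  set W := Matrix.diagonal (fun y => (Q.mulVec p y)⁻¹) with hWdef
  have hW : W.PosSemidef :=
    Matrix.PosSemidef.diagonal fun y => (inv_pos.2 (mulVec_pos hQpos hp y)).le
  have hA : ((Q * T)ᵀ * W * (Q * T)).PosSemidef := by
    simpa [Matrix.conjTranspose_eq_transpose_of_trivial] using
      hW.conjTranspose_mul_mul_same (Q * T)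
  have hAdet : ((Q * T)ᵀ * W * (Q * T)).det = s ^ 2 * (Dmat Q p).det := by
    have : (Q * T)ᵀ * W * (Q * T) = Tᵀ * Dmat Q p * T := by
      simp only [Dmat, Matrix.transpose_mul, Matrix.mul_assoc, hWdef]
    rw [this, Matrix.det_mul, Matrix.det_mul, Matrix.det_transpose, hTdet]
    ring
  have hent : ∀ y x, |(Q * T) y x| ≤ s * Q.mulVec p y := by
    intro y x
    rw [hT, mul_diffMat_mul_mixMat Q s hp.2]
    split_ifs
    · rw [abs_of_nonneg (mul_nonneg hs0.le (mulVec_pos hQpos hp y).le)]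
    · exact abs_sub_le_of_LDP hLDP hε hp y _ _
  have hdiag : ∀ x, ((Q * T)ᵀ * W * (Q * T)) x x ≤ s ^ 2 := by
    intro x
    calc ((Q * T)ᵀ * W * (Q * T)) x x
        = ∑ y, (Q * T) y x ^ 2 * (Q.mulVec p y)⁻¹ := by
          rw [Matrix.mul_apply]
          refine Finset.sum_congr rfl fun y _ => ?_
          rw [hWdef, Matrix.mul_diagonal, Matrix.transpose_apply]
          ring
      _ ≤ ∑ y, s ^ 2 * Q.mulVec p y := by
          refine Finset.sum_le_sum fun y _ => ?_
          have hpos := mulVec_pos hQpos hp y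
          have h2 : (Q * T) y x ^ 2 ≤ (s * Q.mulVec p y) ^ 2 :=
            sq_le_sq' (abs_le.1 (hent y x)).1 (abs_le.1 (hent y x)).2
          rw [← div_eq_mul_inv, div_le_iff₀ hpos]
          linarith
      _ = s ^ 2 := by rw [← Finset.mul_sum, sum_mulVec_eq_one hQcol hp, mul_one]
  have htr : ((Q * T)ᵀ * W * (Q * T)).trace ≤ ((m + 1 : ℕ) : ℝ) * s ^ 2 := by
    calc _ ≤ ∑ _x : Fin (m + 1), s ^ 2 := Finset.sum_le_sum fun x _ => hdiag x
      _ = _ := by simp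
  have h := det_le_pow_of_trace_le m.succ_pos hA htr
  rw [hAdet, pow_succ' (s ^ 2) m, mul_le_mul_iff_right₀ (by positivity)] at h
  exact h

lemma emb_mem_simplex (m : ℕ) {q : Fin m → ℝ} (hq : q ∈ stdCorner m) :
    emb (m + 1) q ∈ simplex (m + 1) := by
  have hq2 : ∑ i : Fin m, q i ≤ 1 := hq.2
  refine ⟨fun x => ?_, ?_⟩
  · unfold emb
    split_ifs with h
    · exact hq.1 _
    · exact sub_nonneg.2 hq2
  · rw [Fin.sum_univ_castSucc]
    simp [emb]

lemma isClosed_simplex (a : ℕ) : IsClosed (simplex a) := by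
  have : simplex a = (⋂ x, {p | 0 ≤ p x}) ∩ {p | ∑ x, p x = 1} := by
    ext p; simp [simplex]
  rw [this]
  exact (isClosed_iInter fun x => isClosed_le continuous_const (continuous_apply x)).inter
    (isClosed_eq (by fun_prop) continuous_const)

/-- The density condition forces `μ` to be concentrated on the simplex: test it on the indicator
of the complement. -/
lemma ae_mem_simplex {m : ℕ} {μ : Measure (Fin (m + 1) → ℝ)} [IsProbabilityMeasure μ]
    {f : (Fin (m + 1 - 1) → ℝ) → ℝ} (hf : IsContDensity μ f) :
    ∀ᵐ p ∂μ, p ∈ simplex (m + 1) := by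
  have hmeas : MeasurableSet (simplex (m + 1))ᶜ := (isClosed_simplex _).measurableSet.compl
  have h := hf.2.2.2 ((simplex (m + 1))ᶜ.indicator 1) (measurable_one.indicator hmeas)
    ⟨1, fun p => by by_cases hp : p ∈ (simplex (m + 1))ᶜ <;> simp [hp]⟩
  rw [integral_indicator_one hmeas, setIntegral_eq_zero_of_forall_eq_zero] at h
  · rwa [measureReal_eq_zero_iff] at h
  · intro q hq
    simp [emb_mem_simplex m hq]

/-- lower bound on `γ_μ(Q)` via the LDP parameter `ε`. -/
theorem gammaMu_ge_LDP_bound {a b : ℕ} (ha : 2 ≤ a) (hb : 2 ≤ b)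
    (Q : Matrix (Fin b) (Fin a) ℝ)
    (hQpos : ∀ y x, 0 < Q y x) (hQcol : ∀ x, ∑ y, Q y x = 1)
    (μ : Measure (Fin a → ℝ)) [IsProbabilityMeasure μ]
    (hrank : Q.rank = a)
    (f : (Fin (a - 1) → ℝ) → ℝ) (hf : IsContDensity μ f)
    (hint : Integrable (fun p => Real.log (Dmat Q p).det) μ)
    (ε : ℝ) (hε : 0 < ε) (hLDP : SatisfiesLDP Q ε) :
    ((a : ℝ) - 1) * Real.log (Real.sqrt (2 * π * Real.exp 1) / (Real.exp ε - 1)) ≤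
      gammaMu Q μ := by
  obtain ⟨m, rfl⟩ : ∃ m, a = m + 1 := ⟨a - 1, by omega⟩
  have hs0 : 0 < Real.exp ε - 1 := by linarith [Real.add_one_le_exp ε]
  have hbound : ∫ p, Real.log (Dmat Q p).det ∂μ ≤ 2 * m * Real.log (Real.exp ε - 1) := by
    calc ∫ p, Real.log (Dmat Q p).det ∂μ
        ≤ ∫ _p, 2 * m * Real.log (Real.exp ε - 1) ∂μ := by
          refine integral_mono_ae hint (integrable_const _) ?_
          filter_upwards [ae_mem_simplex hf] with p hp
          -- `det D_p > 0` is needed here because `Real.log 0 = 0`.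
          have h := Real.log_le_log (Dmat_posDef hQpos hrank hp).det_pos
            (det_Dmat_le hLDP hQpos hQcol hε hp)
          rw [Real.log_pow, Real.log_pow] at h
          push_cast at h
          linarith
      _ = _ := by simp
  have hc : (0 : ℝ) < 2 * π * Real.exp 1 := by positivity
  rw [gammaMu, Real.log_div (Real.sqrt_pos.2 hc).ne' hs0.ne', Real.log_sqrt hc.le]
  push_cast
  linarith

end
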